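/- For all r ∈ [0,1], the infimum of t(r,α) over α ∈ [0, 1/√2] equals min(1/2, h((1+r)/2)); moreover t(r,0) = 1/2 and t(r,1/2) = h((1+r)/2), so the infimum is attained at α = 0 or at α = 1/2. -/

import Mathlib

/-!
Put `s = 1 - 4α²`, which ranges over `[-1, 1]`, and `H x = h((1+x)/2)`, an even function. Then
`t(r,α) = 1/2 + H(s)/2 + H(r) - H(rs)`, so everything depends on the even function
`G(s) = H(s)/2 - H(rs)`; the values `α = 0` and `α = 1/2` correspond to `s = 1` and `s = 0`.

In natural units `H''(x) = -1/(1-x²)`, hence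
`G''(s) = (2r² - 1 - r²s²) / (2(1-s²)(1-r²s²))`, which changes sign at most once on `[0, 1)`, from
nonnegative to nonpositive, say at `c` (`exists_inflection`). On `[-c, c]` the function `G` is
convex and even, so `G 0 ≤ G s` there; on `[c, 1]` it is concave, so
`G s ≥ min (G c) (G 1) ≥ min (G 0) (G 1)`. Hence `G ≥ min (G 0) (G 1)` on `[-1, 1]`
(`min_le_entG`).
-/

/-- The base-2 binary entropy function `h(p) = -p·log₂ p - (1-p)·log₂(1-p)`. -/
noncomputable def binEnt (p : ℝ) : ℝ := -(p * Real.logb 2 p) - (1 - p) * Real.logb 2 (1 - p)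

/-- `g(r,α) = h((1+r)/2 - 2α²r)`. -/
noncomputable def gFun (r α : ℝ) : ℝ := binEnt ((1 + r) / 2 - 2 * α ^ 2 * r)

/-- `t(r,α) = (1 + g(1,α))/2 + h((1+r)/2) - g(r,α)`. -/
noncomputable def tFun (r α : ℝ) : ℝ :=
  (1 + gFun 1 α) / 2 + binEnt ((1 + r) / 2) - gFun r α

/-- The binary entropy, in nats, of a bit with bias `x`, i.e. with probabilities `(1 ± x)/2`. -/
noncomputable def biasEnt (x : ℝ) : ℝ := Real.binEntropy ((1 + x) / 2)

/-- The part of `t(r,α)` that varies with `α`, in nats, as a function of `s = 1 - 4α²`. -/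
noncomputable def entG (r s : ℝ) : ℝ := biasEnt s / 2 - biasEnt (r * s)

/-- The derivative of `biasEnt` on `(-1, 1)`. -/
noncomputable def biasEntDeriv (x : ℝ) : ℝ :=
  (Real.log (1 - (1 + x) / 2) - Real.log ((1 + x) / 2)) / 2

lemma biasEnt_neg (x : ℝ) : biasEnt (-x) = biasEnt x := by
  unfold biasEnt
  rw [← Real.binEntropy_one_sub]
  congr 1
  ring

lemma entG_neg (r s : ℝ) : entG r (-s) = entG r s := by
  simp [entG, biasEnt_neg]

lemma continuous_entG (r : ℝ) : Continuous (entG r) := by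
  have h : Continuous biasEnt := Real.binEntropy_continuous.comp (by fun_prop)
  unfold entG
  fun_prop

lemma hasDerivAt_biasEnt {x : ℝ} (h1 : -1 < x) (h2 : x < 1) :
    HasDerivAt biasEnt (biasEntDeriv x) x := by
  have hp : HasDerivAt (fun x : ℝ => (1 + x) / 2) (1 / 2) x :=
    ((hasDerivAt_id x).const_add 1).div_const 2
  have h := (Real.hasDerivAt_binEntropy (p := (1 + x) / 2) (by linarith) (by linarith)).comp x hp
  refine h.congr_deriv ?_
  unfold biasEntDeriv
  ring

lemma hasDerivAt_biasEntDeriv {x : ℝ} (h1 : -1 < x) (h2 : x < 1) :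
    HasDerivAt biasEntDeriv (-1 / (1 - x ^ 2)) x := by
  have hp : HasDerivAt (fun x : ℝ => (1 + x) / 2) (1 / 2) x :=
    ((hasDerivAt_id x).const_add 1).div_const 2
  have ha : (1 + x) / 2 ≠ 0 := by linarith
  have hb : 1 - (1 + x) / 2 ≠ 0 := by linarith
  have h := (((hp.const_sub 1).log hb).sub (hp.log ha)).div_const 2
  refine HasDerivAt.congr_deriv (f := biasEntDeriv) h ?_
  have h3 : 1 - x ≠ 0 := by linarith
  have h4 : 1 + x ≠ 0 := by linarith
  have e1 : 1 - x ^ 2 = (1 - x) * (1 + x) := by ring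
  have e2 : 1 - (1 + x) / 2 = (1 - x) / 2 := by ring
  rw [e1, e2]
  field_simp
  ring

section

variable {r s : ℝ}

lemma mul_mem_of_mem (hr : r ∈ Set.Icc (0 : ℝ) 1) (h1 : -1 < s) (h2 : s < 1) :
    -1 < r * s ∧ r * s < 1 := by
  rw [← abs_lt, abs_mul, abs_of_nonneg hr.1]
  exact lt_of_le_of_lt (mul_le_of_le_one_left (abs_nonneg s) hr.2) (abs_lt.2 ⟨h1, h2⟩)

lemma hasDerivAt_entG (hr : r ∈ Set.Icc (0 : ℝ) 1) (h1 : -1 < s) (h2 : s < 1) :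
    HasDerivAt (entG r) (biasEntDeriv s / 2 - biasEntDeriv (r * s) * r) s := by
  obtain ⟨h3, h4⟩ := mul_mem_of_mem hr h1 h2
  have hm : HasDerivAt (fun s : ℝ => r * s) r s := by
    simpa using (hasDerivAt_id s).const_mul r
  exact ((hasDerivAt_biasEnt h1 h2).div_const 2).sub
    (HasDerivAt.comp (h₂ := biasEnt) s (hasDerivAt_biasEnt h3 h4) hm)

lemma hasDerivAt_entG_deriv (hr : r ∈ Set.Icc (0 : ℝ) 1) (h1 : -1 < s) (h2 : s < 1) :
    HasDerivAt (fun s => biasEntDeriv s / 2 - biasEntDeriv (r * s) * r)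
      ((2 * r ^ 2 - 1 - r ^ 2 * s ^ 2) / (2 * ((1 - s ^ 2) * (1 - (r * s) ^ 2)))) s := by
  obtain ⟨h3, h4⟩ := mul_mem_of_mem hr h1 h2
  have hm : HasDerivAt (fun s : ℝ => r * s) r s := by
    simpa using (hasDerivAt_id s).const_mul r
  have h := ((hasDerivAt_biasEntDeriv h1 h2).div_const 2).sub
    ((HasDerivAt.comp (h₂ := biasEntDeriv) s (hasDerivAt_biasEntDeriv h3 h4) hm).mul_const r)
  refine h.congr_deriv ?_
  have e1 : 1 - s ^ 2 ≠ 0 := by nlinarith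
  have e2 : 1 - (r * s) ^ 2 ≠ 0 := by nlinarith
  have e3 : (r * s) ^ 2 = r ^ 2 * s ^ 2 := by ring
  generalize (r * s) ^ 2 = u at e2 e3 ⊢
  field_simp
  linear_combination e3

lemma entG_denom_pos (hr : r ∈ Set.Icc (0 : ℝ) 1) (h1 : -1 < s) (h2 : s < 1) :
    0 < 2 * ((1 - s ^ 2) * (1 - (r * s) ^ 2)) := by
  obtain ⟨h3, h4⟩ := mul_mem_of_mem hr h1 h2
  have e1 : 0 < 1 - s ^ 2 := by nlinarith
  have e2 : 0 < 1 - (r * s) ^ 2 := by nlinarith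
  positivity

/-- The numerator `2r² - 1 - r²s²` of `G''` changes sign at most once on `[0, 1)`. -/
lemma exists_inflection (hr : r ∈ Set.Icc (0 : ℝ) 1) :
    ∃ c ∈ Set.Icc (0 : ℝ) 1,
      (∀ s ∈ Set.Ioo (-c) c, 0 ≤ 2 * r ^ 2 - 1 - r ^ 2 * s ^ 2) ∧
      (∀ s ∈ Set.Ioo c 1, 2 * r ^ 2 - 1 - r ^ 2 * s ^ 2 ≤ 0) := by
  obtain ⟨hr0, hr1⟩ := hr
  rcases le_or_gt (2 * r ^ 2) 1 with h | h
  · refine ⟨0, by simp, fun s hs => ?_, fun s _ => ?_⟩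
    · have := hs.1
      have := hs.2
      linarith
    · nlinarith [mul_nonneg (sq_nonneg r) (sq_nonneg s)]
  · have hr2 : 0 < r ^ 2 := by linarith
    have hq : 0 ≤ (2 * r ^ 2 - 1) / r ^ 2 := div_nonneg (by linarith) hr2.le
    set c := Real.sqrt ((2 * r ^ 2 - 1) / r ^ 2) with hc
    have hc0 : 0 ≤ c := Real.sqrt_nonneg _
    have hc2 : r ^ 2 * c ^ 2 = 2 * r ^ 2 - 1 := by
      rw [hc, Real.sq_sqrt hq, mul_div_cancel₀ _ hr2.ne']
    refine ⟨c, ⟨hc0, ?_⟩, fun s hs => ?_, fun s hs => ?_⟩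
    · rw [hc, Real.sqrt_le_left zero_le_one, one_pow, div_le_one hr2]
      nlinarith
    · have : s ^ 2 ≤ c ^ 2 := sq_le_sq' hs.1.le hs.2.le
      nlinarith [mul_le_mul_of_nonneg_left this hr2.le]
    · have : c ^ 2 ≤ s ^ 2 := pow_le_pow_left₀ hc0 hs.1.le 2
      nlinarith [mul_le_mul_of_nonneg_left this hr2.le]

lemma min_le_entG_of_nonneg (hr : r ∈ Set.Icc (0 : ℝ) 1) (hs : s ∈ Set.Icc (0 : ℝ) 1) :
    min (entG r 0) (entG r 1) ≤ entG r s := by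
  obtain ⟨c, ⟨hc0, hc1⟩, hpos, hneg⟩ := exists_inflection hr
  have hconv : ConvexOn ℝ (Set.Icc (-c) c) (entG r) := by
    refine convexOn_of_hasDerivWithinAt2_nonneg (convex_Icc _ _) (continuous_entG r).continuousOn
      (f' := fun s => biasEntDeriv s / 2 - biasEntDeriv (r * s) * r)
      (f'' := fun s => (2 * r ^ 2 - 1 - r ^ 2 * s ^ 2) / (2 * ((1 - s ^ 2) * (1 - (r * s) ^ 2))))
      ?_ ?_ ?_ <;> rw [interior_Icc] <;> intro x hx <;>
      have h1 : -1 < x := by linarith [hx.1]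
    all_goals have h2 : x < 1 := by linarith [hx.2]
    · exact (hasDerivAt_entG hr h1 h2).hasDerivWithinAt
    · exact (hasDerivAt_entG_deriv hr h1 h2).hasDerivWithinAt
    · exact div_nonneg (hpos x hx) (entG_denom_pos hr h1 h2).le
  have hconc : ConcaveOn ℝ (Set.Icc c 1) (entG r) := by
    refine concaveOn_of_hasDerivWithinAt2_nonpos (convex_Icc _ _) (continuous_entG r).continuousOn
      (f' := fun s => biasEntDeriv s / 2 - biasEntDeriv (r * s) * r)
      (f'' := fun s => (2 * r ^ 2 - 1 - r ^ 2 * s ^ 2) / (2 * ((1 - s ^ 2) * (1 - (r * s) ^ 2))))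
      ?_ ?_ ?_ <;> rw [interior_Icc] <;> intro x hx <;>
      have h1 : -1 < x := by linarith [hx.1]
    all_goals have h2 : x < 1 := by linarith [hx.2]
    · exact (hasDerivAt_entG hr h1 h2).hasDerivWithinAt
    · exact (hasDerivAt_entG_deriv hr h1 h2).hasDerivWithinAt
    · exact div_nonpos_of_nonpos_of_nonneg (hneg x hx) (entG_denom_pos hr h1 h2).le
  -- `0` is the midpoint of `-x` and `x`, where the even function `entG r` takes the same value.
  have hzero : ∀ x ∈ Set.Icc (0 : ℝ) c, entG r 0 ≤ entG r x := by
    intro x hx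
    have h := hconv.2 (show -x ∈ Set.Icc (-c) c from ⟨by linarith [hx.2], by linarith [hx.1, hx.2]⟩)
      (show x ∈ Set.Icc (-c) c from ⟨by linarith [hx.1, hx.2], hx.2⟩)
      (show (0 : ℝ) ≤ 1 / 2 by norm_num) (show (0 : ℝ) ≤ 1 / 2 by norm_num) (by norm_num)
    simp only [smul_eq_mul, entG_neg] at h
    have e : (1 / 2 : ℝ) * -x + 1 / 2 * x = 0 := by ring
    rw [e] at h
    linarith
  rcases le_total s c with h | h
  · exact (min_le_left _ _).trans (hzero s ⟨hs.1, h⟩)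
  · have hmin : min (entG r c) (entG r 1) ≤ entG r s :=
      hconc.min_le_of_mem_Icc ⟨le_rfl, hc1⟩ ⟨hc1, le_rfl⟩ ⟨h, hs.2⟩
    exact (min_le_min_right _ (hzero c ⟨hc0, le_rfl⟩)).trans hmin

lemma min_le_entG (hr : r ∈ Set.Icc (0 : ℝ) 1) (hs : s ∈ Set.Icc (-1 : ℝ) 1) :
    min (entG r 0) (entG r 1) ≤ entG r s := by
  rcases le_total 0 s with h | h
  · exact min_le_entG_of_nonneg hr ⟨h, hs.2⟩
  · rw [← entG_neg r s]
    exact min_le_entG_of_nonneg hr ⟨by linarith, by linarith [hs.1]⟩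

end

lemma binEnt_eq (p : ℝ) : binEnt p = Real.binEntropy p / Real.log 2 := by
  simp only [binEnt, Real.binEntropy, Real.logb, Real.log_inv]
  ring

lemma tFun_eq (r α : ℝ) :
    tFun r α = 1 / 2 + biasEnt r / Real.log 2 + entG r (1 - 4 * α ^ 2) / Real.log 2 := by
  have e1 : (1 + 1 : ℝ) / 2 - 2 * α ^ 2 * 1 = (1 + (1 - 4 * α ^ 2)) / 2 := by ring
  have e2 : (1 + r) / 2 - 2 * α ^ 2 * r = (1 + r * (1 - 4 * α ^ 2)) / 2 := by ring
  simp only [tFun, gFun, binEnt_eq, entG, biasEnt, e1, e2]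
  ring

lemma entG_zero (r : ℝ) : entG r 0 = -Real.log 2 / 2 := by
  have h : (1 + 0 : ℝ) / 2 = 2⁻¹ := by norm_num
  simp only [entG, biasEnt, mul_zero, h, Real.binEntropy_two_inv]
  ring

lemma entG_one (r : ℝ) : entG r 1 = -biasEnt r := by
  have h : (1 + 1 : ℝ) / 2 = 1 := by norm_num
  simp [entG, biasEnt, h]

/-- For all `r ∈ [0,1]`, the infimum of `t(r,α)` over `α ∈ [0, 1/√2]` equals
`min(1/2, h((1+r)/2))`; moreover `t(r,0) = 1/2` and `t(r,1/2) = h((1+r)/2)`,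
so the infimum is attained at `α = 0` or at `α = 1/2`. -/
theorem stmt_2 (r : ℝ) (hr : r ∈ Set.Icc (0 : ℝ) 1) :
    sInf (tFun r '' Set.Icc (0 : ℝ) (1 / Real.sqrt 2)) = min (1 / 2) (binEnt ((1 + r) / 2))
    ∧ tFun r 0 = 1 / 2 ∧ tFun r (1 / 2) = binEnt ((1 + r) / 2) := by
  have hlog : 0 < Real.log 2 := Real.log_pos (by norm_num)
  have h0 : tFun r 0 = 1 / 2 := by
    have e : (1 - 4 * 0 ^ 2 : ℝ) = 1 := by norm_num
    rw [tFun_eq, e, entG_one]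
    ring
  have h1 : tFun r (1 / 2) = binEnt ((1 + r) / 2) := by
    have e : (1 - 4 * (1 / 2) ^ 2 : ℝ) = 0 := by norm_num
    rw [tFun_eq, e, entG_zero, binEnt_eq, biasEnt]
    field_simp
    ring
  refine ⟨?_, h0, h1⟩
  have hsqrt : (1 / 2 : ℝ) ≤ 1 / Real.sqrt 2 := by
    have : Real.sqrt 2 ≤ 2 := by
      rw [Real.sqrt_le_left (by norm_num)]
      norm_num
    exact one_div_le_one_div_of_le (by positivity) this
  refine IsLeast.csInf_eq ⟨?_, ?_⟩
  · rcases min_choice (1 / 2) (binEnt ((1 + r) / 2)) with h | h <;> rw [h]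
    · exact ⟨0, ⟨le_rfl, by positivity⟩, h0⟩
    · exact ⟨1 / 2, ⟨by norm_num, hsqrt⟩, h1⟩
  · rintro _ ⟨α, ⟨hα0, hα1⟩, rfl⟩
    have hα2 : α ^ 2 ≤ 1 / 2 := by
      have := pow_le_pow_left₀ hα0 hα1 2
      rwa [div_pow, Real.sq_sqrt (by norm_num), one_pow] at this
    have hmin := min_le_entG (s := 1 - 4 * α ^ 2) hr
      ⟨by linarith, by linarith [sq_nonneg α]⟩
    rw [min_le_iff] at hmin ⊢
    rcases hmin with h | h
    · right
      rw [← h1, tFun_eq, tFun_eq, show (1 - 4 * (1 / 2) ^ 2 : ℝ) = 0 by norm_num]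
      gcongr
    · left
      rw [← h0, tFun_eq, tFun_eq, show (1 - 4 * 0 ^ 2 : ℝ) = 1 by norm_num]
      gcongr
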